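/- (Variation diminishing property of A_ε) For ε > 0 and any continuous 2π-periodic function f, the number of sign changes per period of A_ε * f is at most the number of sign changes per period of f: ν(A_ε * f) ≤ ν(f). -/

import Mathlib

open Real

/-- The kernel `A_ε(x) = (1/(2π)) ∑_{j ∈ ℤ} e^{ijx}/cosh(εj)`. -/
noncomputable def Aker (ε x : ℝ) : ℂ :=
  (1/(2*π : ℂ)) * ∑' j : ℤ, Complex.exp (Complex.I * j * x) / (Real.cosh (ε * j) : ℂ)

/-!
The product expansion `cosh (ε j) = ∏ m, (1 + (c_m j)²)`, with `c_m = 2ε / (π (2m + 1))`, exhibits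
convolution with `A_ε` as the limit of the products of the resolvents `(1 ± c_m d/dx)⁻¹` on
`2π`-periodic functions. If `g = (1 + c d/dx)⁻¹ f`, then `e^{x/c} g` has derivative
`c⁻¹ e^{x/c} f`, so by the mean value theorem `f` changes sign cyclically at least as often as
`g`; and cyclic sign changes of the limit are inherited by some product. A full period has an even
number of sign changes, so `2k - 1` alternations along a half-open period already force `2k` cyclic
ones, which is why the cyclic count suffices.
-/

open Filter Finset Topology

section SignChanges

variable {T : ℝ} {f g : ℝ → ℝ} {n : ℕ}

/-- `ν(f) ≥ n`: the function `f` alternates in sign along `n + 1` points of a half-open interval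
of length `T`. -/
def HasSignChanges (T : ℝ) (f : ℝ → ℝ) (n : ℕ) : Prop :=
  ∃ u : Fin (n + 1) → ℝ, StrictMono u ∧ u (Fin.last n) - u 0 < T ∧
    ∀ i : Fin n, f (u i.castSucc) * f (u i.succ) < 0

/-- The function `f` alternates in sign along `n + 1` cyclically ordered points of a circle of
length `T`. The addition in `x (i + 1)` is cyclic, so the last point is compared with the first. -/
structure IsCyclicAlternation (T : ℝ) (f : ℝ → ℝ) (x : Fin (n + 1) → ℝ) : Prop where
  strictMono : StrictMono x
  last_lt : x (Fin.last n) < x 0 + T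
  mul_neg : ∀ i, f (x i) * f (x (i + 1)) < 0

/-- The function `f` has at least `n + 1` cyclic sign changes over a period `T`. -/
def HasCyclicSignChanges (T : ℝ) (f : ℝ → ℝ) (n : ℕ) : Prop :=
  ∃ x : Fin (n + 1) → ℝ, IsCyclicAlternation T f x

theorem neg_one_pow_mul_mul_pos_of_alternating {y : Fin (n + 1) → ℝ}
    (hy : ∀ i : Fin n, y i.castSucc * y i.succ < 0) (h0 : y 0 ≠ 0) (i : Fin (n + 1)) :
    0 < (-1) ^ (i : ℕ) * (y 0 * y i) := by
  induction i using Fin.induction with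
  | zero => simpa using mul_self_pos.2 h0
  | succ i ih =>
    have hsq : 0 < y i.castSucc ^ 2 := by
      have := left_ne_zero_of_mul (hy i).ne
      positivity
    refine pos_of_mul_pos_right (a := y i.castSucc ^ 2) ?_ hsq.le
    have := mul_pos ih (neg_pos.2 (hy i))
    simp only [Fin.val_castSucc, Fin.val_succ, pow_succ] at this ⊢
    linarith

theorem HasSignChanges.hasCyclicSignChanges (h : HasSignChanges T f n) (hn : Odd n) :
    HasCyclicSignChanges T f n := by
  obtain ⟨u, hu, hT, hf⟩ := h
  refine ⟨u, hu, by linarith, fun i ↦ ?_⟩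
  cases i using Fin.lastCases with
  | last =>
    have h0 : f (u 0) ≠ 0 := left_ne_zero_of_mul (hf ⟨0, hn.pos⟩).ne
    have := neg_one_pow_mul_mul_pos_of_alternating (y := f ∘ u) hf h0 (Fin.last n)
    rw [Fin.val_last, hn.neg_one_pow] at this
    simp only [Function.comp_apply, Fin.last_add_one] at this ⊢
    linarith
  | cast i => simpa only [Fin.coeSucc_eq_succ] using hf i

theorem HasSignChanges.of_succ (h : HasSignChanges T f (n + 1)) : HasSignChanges T f n := by
  obtain ⟨u, hu, hT, hf⟩ := h
  refine ⟨fun i ↦ u i.castSucc, hu.comp (Fin.strictMono_castSucc), ?_, fun i ↦ ?_⟩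
  · have := hu (Fin.castSucc_lt_last (Fin.last n))
    dsimp only
    rw [Fin.castSucc_zero]
    linarith
  · simpa only [Fin.succ_castSucc] using hf i.castSucc

theorem HasCyclicSignChanges.hasSignChanges (h : HasCyclicSignChanges T f n) :
    HasSignChanges T f n := by
  obtain ⟨x, hx⟩ := h
  refine ⟨x, hx.strictMono, by linarith [hx.last_lt], fun i ↦ ?_⟩
  simpa only [Fin.coeSucc_eq_succ] using hx.mul_neg i.castSucc

theorem HasCyclicSignChanges.hasSignChanges_succ (h : HasCyclicSignChanges T f n)
    (hf : Continuous f) (hfp : Function.Periodic f T) : HasSignChanges T f (n + 1) := by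
  obtain ⟨x, hx⟩ := h
  have hend : f (x (Fin.last n)) * f (x 0 + T) < 0 := by
    simpa only [Fin.last_add_one, hfp (x 0)] using hx.mul_neg (Fin.last n)
  obtain ⟨y, hy, hxy, hyT⟩ :
      ∃ y, f (x (Fin.last n)) * f y < 0 ∧ x (Fin.last n) < y ∧ y < x 0 + T := by
    have hnear : ∀ᶠ y in 𝓝[<] (x 0 + T), f (x (Fin.last n)) * f y < 0 :=
      nhdsWithin_le_nhds <| (continuous_const.mul hf).continuousAt.eventually_lt_const hend
    exact (hnear.and (Ioo_mem_nhdsLT hx.last_lt)).exists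
  refine ⟨Fin.snoc x y, Fin.strictMono_iff_lt_succ.2 fun i ↦ ?_, ?_, fun i ↦ ?_⟩
  · cases i using Fin.lastCases with
    | last => simpa using hxy
    | cast i =>
      rw [Fin.succ_castSucc, Fin.snoc_castSucc, Fin.snoc_castSucc]
      exact hx.strictMono i.castSucc_lt_succ
  · rw [Fin.snoc_last, ← Fin.castSucc_zero, Fin.snoc_castSucc]
    linarith
  · cases i using Fin.lastCases with
    | last => simpa using hy
    | cast i =>
      rw [Fin.succ_castSucc, Fin.snoc_castSucc, Fin.snoc_castSucc, ← Fin.coeSucc_eq_succ]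
      exact hx.mul_neg i.castSucc

theorem HasSignChanges.of_forall_hasCyclicSignChanges (hf : Continuous f)
    (hfp : Function.Periodic f T)
    (H : ∀ m, HasCyclicSignChanges T g m → HasCyclicSignChanges T f m)
    (h : HasSignChanges T g n) : HasSignChanges T f n := by
  rcases n.even_or_odd with hn | hn
  · cases n with
    | zero =>
      obtain ⟨u, hu, hT, -⟩ := h
      exact ⟨u, hu, hT, fun i ↦ i.elim0⟩
    | succ m =>
      have hm : Odd m := by simpa [Nat.even_add_one] using hn
      exact (H m (h.of_succ.hasCyclicSignChanges hm)).hasSignChanges_succ hf hfp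
  · exact (H n (h.hasCyclicSignChanges hn)).hasSignChanges

theorem HasCyclicSignChanges.eventually_of_tendsto {ι : Type*} {l : Filter ι} {F : ι → ℝ → ℝ}
    (h : HasCyclicSignChanges T f n) (hF : ∀ x, Tendsto (F · x) l (𝓝 (f x))) :
    ∀ᶠ k in l, HasCyclicSignChanges T (F k) n := by
  obtain ⟨x, hx⟩ := h
  have hneg : ∀ᶠ k in l, ∀ i, F k (x i) * F k (x (i + 1)) < 0 :=
    eventually_all.2 fun i ↦ ((hF (x i)).mul (hF (x (i + 1)))).eventually_lt_const (hx.mul_neg i)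
  exact hneg.mono fun k hk ↦ ⟨x, hx.strictMono, hx.last_lt, hk⟩

theorem exists_mem_Ioo_mul_pos_of_hasDerivAt {c a b : ℝ}
    (hg : ∀ x, HasDerivAt g (c⁻¹ • (f x - g x)) x) (hab : a < b) (h : g a * g b < 0) :
    ∃ z ∈ Set.Ioo a b, 0 < c⁻¹ * (f z * g b) := by
  have hderiv (x : ℝ) : HasDerivAt (fun x ↦ exp (x / c) * g x) (exp (x / c) * (c⁻¹ * f x)) x := by
    convert! ((hasDerivAt_id x).div_const c).exp.mul (hg x) using 1
    simp only [id, smul_eq_mul]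
    ring
  obtain ⟨z, hz, hslope⟩ := exists_hasDerivAt_eq_slope _ _ hab
    (fun x _ ↦ (hderiv x).continuousAt.continuousWithinAt) fun x _ ↦ hderiv x
  refine ⟨z, hz, pos_of_mul_pos_right (a := exp (z / c) * (b - a)) ?_ ?_⟩
  · rw [eq_div_iff (sub_pos.2 hab).ne'] at hslope
    have hb : 0 < exp (b / c) * g b ^ 2 := by
      have := right_ne_zero_of_mul h.ne
      positivity
    have ha := mul_neg_of_pos_of_neg (exp_pos (a / c)) h
    linear_combination hb + ha - g b * hslope
  · have := sub_pos.2 hab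
    positivity

theorem HasCyclicSignChanges.of_hasDerivAt {c : ℝ} (hgp : Function.Periodic g T)
    (hg : ∀ x, HasDerivAt g (c⁻¹ • (f x - g x)) x) (h : HasCyclicSignChanges T g n) :
    HasCyclicSignChanges T f n := by
  obtain ⟨x, hx⟩ := h
  have hgap (i : Fin (n + 1)) : ∃ z, x i < z ∧ (∀ j, i < j → z < x j) ∧ z < x 0 + T ∧
      0 < c⁻¹ * (f z * g (x (i + 1))) := by
    have hneg := hx.mul_neg i
    cases i using Fin.lastCases with
    | last =>
      rw [Fin.last_add_one, ← hgp (x 0)] at hneg ⊢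
      obtain ⟨z, hz, hpos⟩ := exists_mem_Ioo_mul_pos_of_hasDerivAt hg hx.last_lt hneg
      exact ⟨z, hz.1, fun j hj ↦ absurd hj j.le_last.not_gt, hz.2, hpos⟩
    | cast i =>
      rw [Fin.coeSucc_eq_succ] at hneg ⊢
      obtain ⟨z, hz, hpos⟩ :=
        exists_mem_Ioo_mul_pos_of_hasDerivAt hg (hx.strictMono i.castSucc_lt_succ) hneg
      have hle (j : Fin (n + 1)) (hj : i.succ ≤ j) : z < x j :=
        hz.2.trans_le (hx.strictMono.monotone hj)
      exact ⟨z, hz.1, fun j hj ↦ hle j (Fin.castSucc_lt_iff_succ_le.1 hj),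
        (hle _ (Fin.le_last _)).trans hx.last_lt, hpos⟩
  choose z hxz hzx hzT hpos using hgap
  refine ⟨z, fun i j hij ↦ (hzx i j hij).trans (hxz j), ?_, fun i ↦ ?_⟩
  · linarith [hzT (Fin.last n), hxz 0]
  · have hfg := mul_pos (hpos i) (hpos (i + 1))
    have hgg := hx.mul_neg (i + 1)
    refine neg_of_mul_pos_left (b := c⁻¹ ^ 2 * (g (x (i + 1)) * g (x (i + 1 + 1)))) (by linarith) ?_
    exact mul_nonpos_of_nonneg_of_nonpos (sq_nonneg _) hgg.le

end SignChanges
section PeriodicResolvent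

variable {E : Type*} [NormedAddCommGroup E] [NormedSpace ℝ E] {T c : ℝ} {f : ℝ → E}

theorem hasDerivAt_integral_add_right [CompleteSpace E] (hf : Continuous f) (T x : ℝ) :
    HasDerivAt (fun x ↦ ∫ s in x..x + T, f s) (f (x + T) - f x) x := by
  have hprim (y : ℝ) : HasDerivAt (fun x ↦ ∫ s in (0 : ℝ)..x, f s) (f y) y :=
    intervalIntegral.integral_hasDerivAt_right (hf.intervalIntegrable _ _)
      (hf.stronglyMeasurableAtFilter _ _) hf.continuousAt
  refine (((hprim (x + T)).comp_add_const x T).sub (hprim x)).congr_of_eventuallyEq ?_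
  exact .of_forall fun y ↦ (intervalIntegral.integral_interval_sub_left
    (hf.intervalIntegrable _ _) (hf.intervalIntegrable _ _)).symm

/-- The resolvent `(1 + c d/dx)⁻¹ f` on functions of period `T`, for `c ≠ 0`. Integrating
`(e^{x/c} g)' = c⁻¹ e^{x/c} f` over one period gives the formula. -/
noncomputable def periodicResolvent (T c : ℝ) (f : ℝ → E) (x : ℝ) : E :=
  (c * (exp (T / c) - 1))⁻¹ • ∫ s in (0 : ℝ)..T, exp (s / c) • f (x + s)

theorem periodicResolvent_periodic (hfp : Function.Periodic f T) :
    Function.Periodic (periodicResolvent T c f) T := fun x ↦ by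
  simp only [periodicResolvent, add_right_comm x T, hfp _]

theorem periodicResolvent_eq_integral_add_right (x : ℝ) :
    periodicResolvent T c f x =
      ((c * (exp (T / c) - 1))⁻¹ * exp (-x / c)) • ∫ s in x..x + T, exp (s / c) • f s := by
  have hshift : ∫ s in x..x + T, exp (s / c) • f s =
      exp (x / c) • ∫ s in (0 : ℝ)..T, exp (s / c) • f (x + s) := by
    have h := intervalIntegral.integral_comp_add_left (a := 0) (b := T)
      (fun s ↦ exp (s / c) • f s) x
    rw [add_zero] at h
    simp only [← h, add_div, exp_add, mul_smul, intervalIntegral.integral_smul]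
  rw [periodicResolvent, hshift, smul_smul, mul_assoc, ← exp_add, neg_div, neg_add_cancel,
    exp_zero, mul_one]

theorem hasDerivAt_periodicResolvent [CompleteSpace E] (hT : T ≠ 0) (hc : c ≠ 0)
    (hf : Continuous f) (hfp : Function.Periodic f T) (x : ℝ) :
    HasDerivAt (periodicResolvent T c f) (c⁻¹ • (f x - periodicResolvent T c f x)) x := by
  have hexp : HasDerivAt (fun x ↦ (c * (exp (T / c) - 1))⁻¹ * exp (-x / c))
      ((c * (exp (T / c) - 1))⁻¹ * (exp (-x / c) * (-1 / c))) x :=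
    ((hasDerivAt_id x).neg.div_const c).exp.const_mul _
  have hwindow := hasDerivAt_integral_add_right (f := fun s ↦ exp (s / c) • f s) (by fun_prop) T x
  have hE : exp (T / c) - 1 ≠ 0 := by simp [sub_eq_zero, hT, hc]
  rw [funext periodicResolvent_eq_integral_add_right]
  convert! hexp.smul hwindow using 1
  simp only [hfp x, add_div, exp_add, neg_div, exp_neg]
  match_scalars <;> field_simp

theorem continuous_periodicResolvent [CompleteSpace E] (hT : T ≠ 0) (hc : c ≠ 0)
    (hf : Continuous f) (hfp : Function.Periodic f T) :
    Continuous (periodicResolvent T c f) :=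
  continuous_iff_continuousAt.2 fun x ↦ (hasDerivAt_periodicResolvent hT hc hf hfp x).continuousAt

end PeriodicResolvent
section FourierCoeffOn

variable {E : Type*} [NormedAddCommGroup E] [NormedSpace ℂ E] {a b T : ℝ}

theorem fourierCoeffOn_zero_left_eq_integral (hT : 0 < T) (f : ℝ → E) (n : ℤ) :
    fourierCoeffOn hT f n =
      (1 / T) • ∫ x in (0 : ℝ)..T, fourier (-n) (x : AddCircle T) • f x := by
  simp only [fourierCoeffOn_eq_integral, fourier_coe_apply, sub_zero]

theorem norm_fourierCoeffOn_le (hab : a < b) (f : ℝ → E) (n : ℤ) :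
    ‖fourierCoeffOn hab f n‖ ≤ (b - a)⁻¹ * ∫ x in a..b, ‖f x‖ := by
  have : 0 ≤ (b - a)⁻¹ := inv_nonneg.2 (sub_pos.2 hab).le
  rw [fourierCoeffOn_eq_integral, one_div, norm_smul, Real.norm_of_nonneg this]
  gcongr
  refine (intervalIntegral.norm_integral_le_integral_norm hab.le).trans_eq ?_
  simp only [norm_smul, fourier_apply, Circle.norm_coe, one_mul]

theorem fourierCoeffOn_add (hab : a < b) {f g : ℝ → E}
    (hf : IntervalIntegrable f MeasureTheory.volume a b)
    (hg : IntervalIntegrable g MeasureTheory.volume a b) (n : ℤ) :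
    fourierCoeffOn hab (f + g) n = fourierCoeffOn hab f n + fourierCoeffOn hab g n := by
  have hfourier : Continuous fun x : ℝ ↦ fourier (-n) (x : AddCircle (b - a)) :=
    (map_continuous _).comp (AddCircle.continuous_mk' _)
  simp only [fourierCoeffOn_eq_integral, Pi.add_apply, smul_add]
  rw [intervalIntegral.integral_add (hf.continuousOn_smul hfourier.continuousOn)
    (hg.continuousOn_smul hfourier.continuousOn), smul_add]

theorem fourierCoeffOn_deriv (hab : a < b) {f f' : ℝ → ℂ}
    (hf : ∀ x ∈ Set.uIcc a b, HasDerivAt f (f' x) x)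
    (hf' : IntervalIntegrable f' MeasureTheory.volume a b) (hfab : f a = f b) (n : ℤ) :
    fourierCoeffOn hab f' n = 2 * π * Complex.I * n / (b - a) * fourierCoeffOn hab f n := by
  rcases eq_or_ne n 0 with rfl | hn
  · simp [fourierCoeffOn_eq_integral, intervalIntegral.integral_eq_sub_of_hasDerivAt hf hf', hfab]
  · have hba : (b - a : ℂ) ≠ 0 := by exact_mod_cast (sub_pos.2 hab).ne'
    rw [fourierCoeffOn_of_hasDerivAt hab hn hf hf', hfab]
    field_simp [Complex.I_ne_zero]
    ring

theorem fourierCoeffOn_eq_mul_of_hasDerivAt (hT : 0 < T) {c : ℝ} (hc : c ≠ 0) {f g : ℝ → ℂ}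
    (hf : Continuous f) (hg : ∀ x, HasDerivAt g (c⁻¹ • (f x - g x)) x)
    (hgp : Function.Periodic g T) (n : ℤ) :
    fourierCoeffOn hT f n =
      (1 + (c * (2 * π * n / T) : ℝ) * Complex.I) * fourierCoeffOn hT g n := by
  have hgc : Continuous g := continuous_iff_continuousAt.2 fun x ↦ (hg x).continuousAt
  have hsplit : f = g + fun x ↦ (c : ℂ) * c⁻¹ • (f x - g x) := by
    ext x
    simp [hc]
  have hg'c : Continuous fun x ↦ c⁻¹ • (f x - g x) := by fun_prop
  have hderiv := fourierCoeffOn_deriv hT (fun x _ ↦ hg x) (hg'c.intervalIntegrable _ _)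
    (by simpa using (hgp 0).symm) n
  rw [hsplit, fourierCoeffOn_add hT (hgc.intervalIntegrable _ _)
    ((hg'c.const_mul _).intervalIntegrable _ _), fourierCoeffOn.const_mul, hderiv]
  push_cast
  ring

theorem hasSum_fourierCoeffOn_of_summable (hT : 0 < T) {g : ℝ → ℂ} (hg : Continuous g)
    (hgp : Function.Periodic g T) (hs : Summable (fourierCoeffOn hT g)) (x : ℝ) :
    HasSum (fun n ↦ fourierCoeffOn hT g n * fourier n (x : AddCircle T)) (g x) := by
  have : Fact (0 < T) := ⟨hT⟩
  let F : C(AddCircle T, ℂ) := ⟨hgp.lift, continuous_coinduced_dom.2 hg⟩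
  have hF : fourierCoeff F = fourierCoeffOn hT g := by
    ext n
    rw [fourierCoeff_eq_intervalIntegral F n 0, zero_add, fourierCoeffOn_zero_left_eq_integral]
    rfl
  have h := has_pointwise_sum_fourier_series_of_summable (f := F) (hF ▸ hs) x
  rwa [hF] at h

theorem integral_fourier_sub_mul (hT : 0 < T) (f : ℝ → ℂ) (n : ℤ) (x : ℝ) :
    ∫ t in (0 : ℝ)..T, fourier n ((x - t : ℝ) : AddCircle T) * f t =
      T * fourierCoeffOn hT f n * fourier n (x : AddCircle T) := by
  have hT0 : (T : ℂ) ≠ 0 := by exact_mod_cast hT.ne'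
  have hsplit (t : ℝ) : fourier n ((x - t : ℝ) : AddCircle T) * f t =
      fourier n (x : AddCircle T) * (fourier (-n) (t : AddCircle T) • f t) := by
    rw [smul_eq_mul, ← mul_assoc]
    simp only [fourier_coe_apply, ← Complex.exp_add]
    push_cast
    ring_nf
  rw [fourierCoeffOn_zero_left_eq_integral, Complex.real_smul]
  simp only [hsplit, intervalIntegral.integral_const_mul]
  push_cast
  field_simp

theorem hasSum_integral_tsum_fourier_mul (hT : 0 < T) {w : ℤ → ℂ} (hw : Summable w) {f : ℝ → ℂ}
    (hf : IntervalIntegrable f MeasureTheory.volume 0 T) (x : ℝ) :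
    HasSum (fun n ↦ T * w n * fourierCoeffOn hT f n * fourier n (x : AddCircle T))
      (∫ t in (0 : ℝ)..T, (∑' n, w n * fourier n ((x - t : ℝ) : AddCircle T)) * f t) := by
  have hcont (n : ℤ) : Continuous fun t : ℝ ↦ w n * fourier n ((x - t : ℝ) : AddCircle T) := by
    simp only [fourier_coe_apply]
    fun_prop
  have hnorm (n : ℤ) (t : ℝ) : ‖w n * fourier n ((x - t : ℝ) : AddCircle T)‖ = ‖w n‖ := by
    rw [norm_mul, fourier_apply, Circle.norm_coe, mul_one]
  have hsum (t : ℝ) : Summable fun n ↦ w n * fourier n ((x - t : ℝ) : AddCircle T) :=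
    .of_norm (by simpa only [hnorm] using hw.norm)
  have hterm (n : ℤ) : ∫ t in (0 : ℝ)..T, w n * fourier n ((x - t : ℝ) : AddCircle T) * f t =
      T * w n * fourierCoeffOn hT f n * fourier n (x : AddCircle T) := by
    simp only [mul_assoc (w n), intervalIntegral.integral_const_mul, integral_fourier_sub_mul hT]
    ring
  simp only [← hterm]
  refine intervalIntegral.hasSum_integral_of_dominated_convergence (fun n t ↦ ‖w n‖ * ‖f t‖)
    (fun n ↦ ?_) (fun n ↦ .of_forall fun t _ ↦ ?_) (.of_forall fun t _ ↦ hw.norm.mul_right _) ?_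
    (.of_forall fun t _ ↦ (hsum t).hasSum.mul_right _)
  · rw [Set.uIoc_of_le hT.le]
    exact (hcont n).aestronglyMeasurable.mul hf.aestronglyMeasurable
  · rw [norm_mul, hnorm]
  · simp only [tsum_mul_right]
    exact hf.norm.const_mul _

end FourierCoeffOn
section IteratedResolvent

variable {T : ℝ} {c : ℕ → ℝ} {f : ℝ → ℝ}

/-- The function `∏_{m < N} (1 - c_m² d²/dx²)⁻¹ f` of period `T`. Each second-order factor is
inverted through its first-order factors `1 + c_m d/dx` and `1 - c_m d/dx`. -/
noncomputable def iteratedResolvent (T : ℝ) (c : ℕ → ℝ) (f : ℝ → ℝ) : ℕ → ℝ → ℝ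
  | 0 => f
  | N + 1 => periodicResolvent T (-c N) (periodicResolvent T (c N) (iteratedResolvent T c f N))

theorem iteratedResolvent_periodic (hfp : Function.Periodic f T) (N : ℕ) :
    Function.Periodic (iteratedResolvent T c f N) T := by
  induction N with
  | zero => exact hfp
  | succ N ih => exact periodicResolvent_periodic (periodicResolvent_periodic ih)

theorem continuous_iteratedResolvent (hT : T ≠ 0) (hc : ∀ m, c m ≠ 0) (hf : Continuous f)
    (hfp : Function.Periodic f T) (N : ℕ) : Continuous (iteratedResolvent T c f N) := by
  induction N with
  | zero => exact hf
  | succ N ih =>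
    have hp := iteratedResolvent_periodic (c := c) hfp N
    exact continuous_periodicResolvent hT (neg_ne_zero.2 (hc N))
      (continuous_periodicResolvent hT (hc N) ih hp) (periodicResolvent_periodic hp)

theorem HasCyclicSignChanges.of_periodicResolvent {a : ℝ} {n : ℕ} (hT : T ≠ 0) (ha : a ≠ 0)
    (hf : Continuous f) (hfp : Function.Periodic f T)
    (h : HasCyclicSignChanges T (periodicResolvent T a f) n) : HasCyclicSignChanges T f n :=
  h.of_hasDerivAt (periodicResolvent_periodic hfp) (hasDerivAt_periodicResolvent hT ha hf hfp)

theorem HasCyclicSignChanges.of_iteratedResolvent {n : ℕ} (hT : T ≠ 0) (hc : ∀ m, c m ≠ 0)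
    (hf : Continuous f) (hfp : Function.Periodic f T) (N : ℕ)
    (h : HasCyclicSignChanges T (iteratedResolvent T c f N) n) : HasCyclicSignChanges T f n := by
  induction N with
  | zero => exact h
  | succ N ih =>
    have hcont := continuous_iteratedResolvent hT hc hf hfp N
    have hper := iteratedResolvent_periodic (c := c) hfp N
    refine ih (of_periodicResolvent hT (hc N) hcont hper ?_)
    exact of_periodicResolvent hT (neg_ne_zero.2 (hc N))
      (continuous_periodicResolvent hT (hc N) hcont hper) (periodicResolvent_periodic hper) h

theorem fourierCoeffOn_eq_mul_periodicResolvent (hT : 0 < T) {a : ℝ} (ha : a ≠ 0)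
    (hf : Continuous f) (hfp : Function.Periodic f T) (n : ℤ) :
    fourierCoeffOn hT (fun x ↦ (f x : ℂ)) n = (1 + (a * (2 * π * n / T) : ℝ) * Complex.I) *
      fourierCoeffOn hT (fun x ↦ ((periodicResolvent T a f x : ℝ) : ℂ)) n := by
  refine fourierCoeffOn_eq_mul_of_hasDerivAt hT ha (Complex.continuous_ofReal.comp hf)
    (fun x ↦ ?_) ((periodicResolvent_periodic hfp).comp Complex.ofReal) n
  simpa [Function.comp_def] using (hasDerivAt_periodicResolvent hT.ne' ha hf hfp x).ofReal_comp

theorem fourierCoeffOn_eq_prod_mul_iteratedResolvent (hT : 0 < T) (hc : ∀ m, c m ≠ 0)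
    (hf : Continuous f) (hfp : Function.Periodic f T) (N : ℕ) (n : ℤ) :
    fourierCoeffOn hT (fun x ↦ (f x : ℂ)) n =
      (∏ m ∈ range N, (1 + (c m * (2 * π * n / T)) ^ 2) : ℝ) *
        fourierCoeffOn hT (fun x ↦ (iteratedResolvent T c f N x : ℂ)) n := by
  induction N with
  | zero => simp [iteratedResolvent]
  | succ N ih =>
    have hcont := continuous_iteratedResolvent hT.ne' hc hf hfp N
    have hper := iteratedResolvent_periodic (c := c) hfp N
    have hfactor (θ : ℝ) : (1 + (c N * θ : ℝ) * Complex.I) * (1 + (-c N * θ : ℝ) * Complex.I) =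
        (1 + (c N * θ) ^ 2 : ℝ) := by
      push_cast
      linear_combination -(c N * θ : ℂ) ^ 2 * Complex.I_sq
    rw [ih, fourierCoeffOn_eq_mul_periodicResolvent hT (hc N) hcont hper,
      fourierCoeffOn_eq_mul_periodicResolvent hT (neg_ne_zero.2 (hc N))
        (continuous_periodicResolvent hT.ne' (hc N) hcont hper) (periodicResolvent_periodic hper),
      ← mul_assoc (1 + _ : ℂ), hfactor, prod_range_succ, Complex.ofReal_mul,
      mul_assoc (Complex.ofReal _), iteratedResolvent]

theorem one_add_sq_le_prod_one_add_sq (c : ℕ → ℝ) (y : ℝ) {N : ℕ} (hN : N ≠ 0) :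
    1 + (c 0 * y) ^ 2 ≤ ∏ m ∈ range N, (1 + (c m * y) ^ 2) := by
  obtain ⟨M, rfl⟩ := Nat.exists_eq_succ_of_ne_zero hN
  rw [Nat.succ_eq_add_one, prod_range_succ']
  have hone : 1 ≤ ∏ m ∈ range M, (1 + (c (m + 1) * y) ^ 2) :=
    prod_induction _ (1 ≤ ·) (fun _ _ ↦ one_le_mul_of_one_le_of_one_le) le_rfl
      fun _ _ ↦ le_add_of_nonneg_right (sq_nonneg _)
  exact le_mul_of_one_le_left (by positivity) hone

theorem summable_inv_one_add_mul_int_sq {a : ℝ} (ha : a ≠ 0) :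
    Summable fun n : ℤ ↦ (1 + (a * n) ^ 2)⁻¹ := by
  refine Summable.of_norm_bounded_eventually
    ((Real.summable_one_div_int_pow.2 one_lt_two).mul_left (a ^ 2)⁻¹) ?_
  filter_upwards [(Set.finite_singleton (0 : ℤ)).compl_mem_cofinite] with n hn
  have hn' : (n : ℝ) ≠ 0 := by exact_mod_cast hn
  rw [Real.norm_of_nonneg (by positivity), one_div, ← mul_inv, ← mul_pow]
  gcongr
  linarith

theorem fourierCoeffOn_iteratedResolvent (hT : 0 < T) (hc : ∀ m, c m ≠ 0) (hf : Continuous f)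
    (hfp : Function.Periodic f T) (N : ℕ) (n : ℤ) :
    fourierCoeffOn hT (fun x ↦ (iteratedResolvent T c f N x : ℂ)) n =
      fourierCoeffOn hT (fun x ↦ (f x : ℂ)) n /
        (∏ m ∈ range N, (1 + (c m * (2 * π * n / T)) ^ 2) : ℝ) := by
  have hP : 0 < ∏ m ∈ range N, (1 + (c m * (2 * π * n / T)) ^ 2) :=
    prod_pos fun m _ ↦ by positivity
  rw [eq_div_iff (by exact_mod_cast hP.ne'), mul_comm]
  exact (fourierCoeffOn_eq_prod_mul_iteratedResolvent hT hc hf hfp N n).symm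

theorem norm_fourierCoeffOn_iteratedResolvent_le (hT : 0 < T) (hc : ∀ m, c m ≠ 0)
    (hf : Continuous f) (hfp : Function.Periodic f T) {N : ℕ} (hN : N ≠ 0) (n : ℤ) :
    ‖fourierCoeffOn hT (fun x ↦ (iteratedResolvent T c f N x : ℂ)) n‖ ≤
      (T⁻¹ * ∫ x in (0 : ℝ)..T, ‖(f x : ℂ)‖) * (1 + (c 0 * (2 * π / T) * n) ^ 2)⁻¹ := by
  have hC := norm_fourierCoeffOn_le hT (fun x ↦ (f x : ℂ)) n
  rw [sub_zero] at hC
  have hP := one_add_sq_le_prod_one_add_sq c (2 * π * n / T) hN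
  rw [mul_div_right_comm, ← mul_assoc] at hP
  have hP0 := (add_pos_of_pos_of_nonneg one_pos (sq_nonneg _)).trans_le hP
  rw [fourierCoeffOn_iteratedResolvent hT hc hf hfp, norm_div, Complex.norm_real,
    div_eq_mul_inv, mul_div_right_comm, Real.norm_of_nonneg hP0.le]
  gcongr
  exact (norm_nonneg _).trans hC

theorem tendsto_iteratedResolvent (hT : 0 < T) (hc : ∀ m, c m ≠ 0) (hf : Continuous f)
    (hfp : Function.Periodic f T) {Λ : ℤ → ℝ} (hΛ0 : ∀ n, Λ n ≠ 0)
    (hΛ : ∀ n : ℤ, Tendsto (fun N ↦ ∏ m ∈ range N, (1 + (c m * (2 * π * n / T)) ^ 2)) atTop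
      (𝓝 (Λ n))) (x : ℝ) :
    Tendsto (fun N ↦ (iteratedResolvent T c f N x : ℂ)) atTop
      (𝓝 (∑' n, fourierCoeffOn hT (fun x ↦ (f x : ℂ)) n / Λ n * fourier n (x : AddCircle T))) := by
  have hsum : Summable fun n : ℤ ↦
      (T⁻¹ * ∫ x in (0 : ℝ)..T, ‖(f x : ℂ)‖) * (1 + (c 0 * (2 * π / T) * n) ^ 2)⁻¹ :=
    (summable_inv_one_add_mul_int_sq
      (mul_ne_zero (hc 0) (div_ne_zero Real.two_pi_pos.ne' hT.ne'))).mul_left _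
  have hseries : ∀ᶠ N in atTop, ∑' n, fourierCoeffOn hT (fun x ↦ (iteratedResolvent T c f N x : ℂ))
      n * fourier n (x : AddCircle T) = (iteratedResolvent T c f N x : ℂ) := by
    filter_upwards [eventually_ne_atTop 0] with N hN
    exact (hasSum_fourierCoeffOn_of_summable hT
      (Complex.continuous_ofReal.comp (continuous_iteratedResolvent hT.ne' hc hf hfp N))
      ((iteratedResolvent_periodic hfp N).comp _) (.of_norm_bounded hsum
        (norm_fourierCoeffOn_iteratedResolvent_le hT hc hf hfp hN)) x).tsum_eq
  refine Tendsto.congr' hseries (tendsto_tsum_of_dominated_convergence hsum (fun n ↦ ?_) ?_)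
  · simp only [fourierCoeffOn_iteratedResolvent hT hc hf hfp]
    exact (tendsto_const_nhds.div ((Complex.continuous_ofReal.tendsto _).comp (hΛ n))
      (by exact_mod_cast hΛ0 n)).mul_const _
  · filter_upwards [eventually_ne_atTop 0] with N hN n
    rw [norm_mul, fourier_apply, Circle.norm_coe, mul_one]
    exact norm_fourierCoeffOn_iteratedResolvent_le hT hc hf hfp hN n

end IteratedResolvent

section Cosh

theorem tendsto_euler_sinh_prod (x : ℝ) :
    Tendsto (fun n ↦ π * x * ∏ j ∈ range n, (1 + x ^ 2 / ((j : ℝ) + 1) ^ 2)) atTop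
      (𝓝 (sinh (π * x))) := by
  have h := (Complex.tendsto_euler_sin_prod (x * Complex.I)).mul_const (-Complex.I)
  rw [← tendsto_ofReal_iff]
  convert! h using 2
  · push_cast
    simp only [mul_pow, Complex.I_sq, mul_neg_one, neg_div, sub_neg_eq_add]
    linear_combination (π * x * ∏ j ∈ range _, (1 + (x : ℂ) ^ 2 / ((j : ℂ) + 1) ^ 2)) *
      Complex.I_sq
  · rw [← mul_assoc, Complex.sin_mul_I, mul_neg, mul_assoc, Complex.I_mul_I, mul_neg_one, neg_neg]
    push_cast
    rfl

theorem prod_range_two_mul_one_add_sq_div (x : ℝ) (n : ℕ) :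
    ∏ j ∈ range (2 * n), (1 + (2 * x) ^ 2 / ((j : ℝ) + 1) ^ 2) =
      (∏ m ∈ range n, (1 + (2 * x / (2 * m + 1)) ^ 2)) *
        ∏ j ∈ range n, (1 + x ^ 2 / ((j : ℝ) + 1) ^ 2) := by
  induction n with
  | zero => simp
  | succ n ih =>
    rw [mul_add_one, prod_range_succ, prod_range_succ, ih, prod_range_succ, prod_range_succ]
    push_cast
    field_simp
    ring

theorem tendsto_euler_cosh_prod (x : ℝ) :
    Tendsto (fun n ↦ ∏ m ∈ range n, (1 + (2 * x / (2 * (m : ℝ) + 1)) ^ 2)) atTop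
      (𝓝 (cosh (π * x))) := by
  rcases eq_or_ne x 0 with rfl | hx
  · simp
  have hsinh : sinh (π * x) ≠ 0 := by simp [hx, Real.pi_ne_zero]
  have hquot := ((tendsto_euler_sinh_prod (2 * x)).comp
    (tendsto_id.const_mul_atTop' two_pos)).div ((tendsto_euler_sinh_prod x).const_mul 2)
      (mul_ne_zero two_ne_zero hsinh)
  convert! hquot using 2 with n
  · have hP : ∏ j ∈ range n, (1 + x ^ 2 / ((j : ℝ) + 1) ^ 2) ≠ 0 :=
      prod_ne_zero_iff.2 fun j _ ↦ by positivity
    simp only [Pi.div_apply, Function.comp_apply, id, prod_range_two_mul_one_add_sq_div]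
    field_simp [hP, Real.pi_ne_zero]
  · rw [mul_left_comm π, sinh_two_mul]
    field_simp

theorem one_add_half_sq_le_cosh (x : ℝ) : 1 + (x / 2) ^ 2 ≤ cosh x := by
  have hexp := Real.quadratic_le_exp_of_nonneg (abs_nonneg x)
  rw [sq_abs] at hexp
  rw [← cosh_abs, cosh_eq]
  have htangent := add_one_le_exp (-|x|)
  linarith

theorem summable_inv_cosh_mul_int {ε : ℝ} (hε : ε ≠ 0) :
    Summable fun n : ℤ ↦ (cosh (ε * n))⁻¹ := by
  refine .of_nonneg_of_le (fun n ↦ (inv_pos.2 (cosh_pos _)).le) (fun n ↦ ?_)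
    (summable_inv_one_add_mul_int_sq (div_ne_zero hε two_ne_zero))
  gcongr
  simpa only [mul_div_right_comm] using one_add_half_sq_le_cosh (ε * n)

theorem Aker_eq_tsum_fourier (ε x : ℝ) :
    Aker ε x = ∑' n : ℤ, (2 * π * cosh (ε * n) : ℂ)⁻¹ * fourier n (x : AddCircle (2 * π)) := by
  rw [Aker, ← tsum_mul_left]
  refine tsum_congr fun n ↦ ?_
  have harg : 2 * π * Complex.I * n * x / (2 * π : ℝ) = Complex.I * n * x := by
    push_cast
    field_simp
  rw [fourier_coe_apply, harg, one_div, Complex.ofReal_cosh, Complex.ofReal_mul,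
    Complex.ofReal_intCast, mul_inv]
  ring

theorem hasSum_integral_Aker_mul {ε : ℝ} (hε : ε ≠ 0) {f : ℝ → ℂ}
    (hf : IntervalIntegrable f MeasureTheory.volume 0 (2 * π)) (x : ℝ) :
    HasSum (fun n : ℤ ↦ fourierCoeffOn two_pi_pos f n / (cosh (ε * n) : ℝ) *
      fourier n (x : AddCircle (2 * π))) (∫ t in (0 : ℝ)..(2 * π), Aker ε (x - t) * f t) := by
  have hw : Summable fun n : ℤ ↦ (2 * π * cosh (ε * n) : ℂ)⁻¹ := by
    have hreal := (summable_inv_cosh_mul_int hε).mul_left (2 * π)⁻¹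
    simp only [← mul_inv] at hreal
    exact_mod_cast Complex.summable_ofReal.2 hreal
  simp only [Aker_eq_tsum_fourier]
  convert! hasSum_integral_tsum_fourier_mul two_pi_pos hw hf x using 3 with n
  push_cast
  field_simp

theorem HasCyclicSignChanges.of_integral_Aker_mul {ε : ℝ} (hε : ε ≠ 0) {f G : ℝ → ℝ}
    (hf : Continuous f) (hfp : Function.Periodic f (2 * π))
    (hG : ∀ x, (G x : ℂ) = ∫ t in (0 : ℝ)..(2 * π), Aker ε (x - t) * (f t : ℂ)) {n : ℕ}
    (h : HasCyclicSignChanges (2 * π) G n) : HasCyclicSignChanges (2 * π) f n := by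
  set c : ℕ → ℝ := fun m ↦ 2 * ε / (π * (2 * m + 1))
  have hc (m : ℕ) : c m ≠ 0 := by positivity
  have hprod (j : ℤ) : Tendsto (fun N ↦ ∏ m ∈ range N, (1 + (c m * (2 * π * j / (2 * π))) ^ 2))
      atTop (𝓝 (cosh (ε * j))) := by
    have hfactor (m : ℕ) : 2 * (ε * j / π) / (2 * m + 1) = c m * (2 * π * j / (2 * π)) := by
      simp only [c]
      field_simp
    simpa only [hfactor, mul_div_cancel₀ _ Real.pi_ne_zero] using
      tendsto_euler_cosh_prod (ε * j / π)
  have hlim (x : ℝ) : Tendsto (iteratedResolvent (2 * π) c f · x) atTop (𝓝 (G x)) := by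
    have hfi : IntervalIntegrable (fun t ↦ (f t : ℂ)) MeasureTheory.volume 0 (2 * π) :=
      (Complex.continuous_ofReal.comp hf).intervalIntegrable _ _
    rw [← tendsto_ofReal_iff, hG, ← (hasSum_integral_Aker_mul hε hfi x).tsum_eq]
    exact tendsto_iteratedResolvent two_pi_pos hc hf hfp (fun j ↦ (cosh_pos _).ne') hprod x
  obtain ⟨N, hN⟩ := (h.eventually_of_tendsto hlim).exists
  exact hN.of_iteratedResolvent two_pi_pos.ne' hc hf hfp

end Cosh

theorem stmt15 (ε : ℝ) (hε : 0 < ε) (f : ℝ → ℝ) (hf : Continuous f)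
    (hfp : Function.Periodic f (2*π))
    (G : ℝ → ℝ) (hG : ∀ x, (G x : ℂ) = ∫ t in (0:ℝ)..(2*π), Aker ε (x - t) * (f t : ℂ))
    (n : ℕ) (t : Fin (n+1) → ℝ) (ht : StrictMono t) (htl : t (Fin.last n) - t 0 < 2*π)
    (hsc : ∀ i : Fin n, G (t i.castSucc) * G (t i.succ) < 0) :
    ∃ u : Fin (n+1) → ℝ, StrictMono u ∧ u (Fin.last n) - u 0 < 2*π ∧
      ∀ i : Fin n, f (u i.castSucc) * f (u i.succ) < 0 :=
  have hG_changes : HasSignChanges (2 * π) G n := ⟨t, ht, htl, hsc⟩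
  hG_changes.of_forall_hasCyclicSignChanges hf hfp
    fun _ h ↦ h.of_integral_Aker_mul hε.ne' hf hfp hG
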